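/- arXiv:2410.00322 — 3 statements merged into one kernel-verified Lean document; each statement's English description precedes it below -/
import Mathlib

section
/- Let 0 < w₁ < w₂ < ⋯ < wₙ < 1 be given weights and let θ ∈ (0,1). Suppose m̃ ∈ {1,…,n−1} is such that w_{m̃} ≤ θ < w_{m̃+1}. Then L(w_{m̃} | θ) ≤ L(w_m | θ) for every index m < m̃, and L(w_{m̃+1} | θ) ≤ L(w_m | θ) for every index m > m̃+1. Hence the minimum of L(w_m | θ) over m ∈ {1,…,n} is attained at m̃ or at m̃+1. -/
open MeasureTheory Set

/-- `Hfun f₁ f₂ w = E[X₂² · 1{(1−w)X₂² < wX₁²}]` for independent `X₁ ∼ f₁`, `X₂ ∼ f₂`,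
written as a double integral against the product density. -/
noncomputable def Hfun (f₁ f₂ : ℝ → ℝ) (w : ℝ) : ℝ :=
  ∫ x₁ : ℝ, (∫ x₂ : ℝ, (if (1 - w) * x₂ ^ 2 < w * x₁ ^ 2 then x₂ ^ 2 else 0) * f₂ x₂) * f₁ x₁

/-- `Gfun f₁ f₂ w = E[X₁² · 1{(1−w)X₂² ≥ wX₁²}]` for independent `X₁ ∼ f₁`, `X₂ ∼ f₂`,
written as a double integral against the product density. -/
noncomputable def Gfun (f₁ f₂ : ℝ → ℝ) (w : ℝ) : ℝ :=
  ∫ x₁ : ℝ, (∫ x₂ : ℝ, (if w * x₁ ^ 2 ≤ (1 - w) * x₂ ^ 2 then x₁ ^ 2 else 0) * f₂ x₂) * f₁ x₁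

/-- The receiver's expected loss `L(w ∣ θ) = θ·G(w) + (1−θ)·H(w)`. -/
noncomputable def Lfun (f₁ f₂ : ℝ → ℝ) (w θ : ℝ) : ℝ :=
  θ * Gfun f₁ f₂ w + (1 - θ) * Hfun f₁ f₂ w

/-- A probability density on `ℝ` that is continuous, everywhere positive, symmetric about `0`,
and has a finite second moment. -/
def GoodDensity (f : ℝ → ℝ) : Prop :=
  Continuous f ∧ (∀ x, 0 < f x) ∧ (∀ x, f (-x) = f x) ∧
    (∫ x : ℝ, f x) = 1 ∧ Integrable fun x : ℝ => x ^ 2 * f x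

/-!
Pointwise, with `a = X₁²` and `b = X₂²`, paying `θ a` instead of `(1 - θ) b` saves `b - θ (a + b)`,
and the rule with weight `w` does so exactly when `w (a + b) ≤ b`. The loss is therefore smallest
at `w = θ`, and moving `w` towards `θ` from either side only reverses choices that were wrong.
Hence `L(· ∣ θ)` decreases up to `θ` and increases from `θ` on.
-/

/-- The receiver's realised loss when the two squared errors are `a = X₁²` and `b = X₂²`: the rule
with weight `w` incurs `θ a` if `w a ≤ (1 - w) b` and `(1 - θ) b` otherwise, so that `L(w ∣ θ)` is
its expectation. -/
noncomputable def selectionLoss (w θ a b : ℝ) : ℝ :=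
  if w * a ≤ (1 - w) * b then θ * a else (1 - θ) * b

lemma selectionLoss_eq_sub (w θ a b : ℝ) :
    selectionLoss w θ a b =
      (1 - θ) * b - if w * (a + b) ≤ b then b - θ * (a + b) else 0 := by
  have hiff : w * a ≤ (1 - w) * b ↔ w * (a + b) ≤ b := by
    constructor <;> intro h <;> linarith
  simp only [selectionLoss, hiff]
  split_ifs <;> ring

lemma mul_selectionLoss {c : ℝ} (hc : 0 ≤ c) (w θ a b : ℝ) :
    c * selectionLoss w θ a b = selectionLoss w θ (c * a) (c * b) := by
  obtain rfl | hc := hc.eq_or_lt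
  · simp [selectionLoss]
  · have hiff : w * (c * a) ≤ (1 - w) * (c * b) ↔ w * a ≤ (1 - w) * b := by
      rw [mul_left_comm w, mul_left_comm (1 - w), mul_le_mul_iff_right₀ hc]
    simp only [selectionLoss, hiff, mul_ite, mul_left_comm c]

section Pointwise

variable {a b : ℝ}

lemma antitoneOn_selectionLoss (hab : 0 ≤ a + b) (θ : ℝ) :
    AntitoneOn (fun w => selectionLoss w θ a b) (Iic θ) := by
  intro v _ w (hw : w ≤ θ) hvw
  have hv_le_w : v * (a + b) ≤ w * (a + b) := mul_le_mul_of_nonneg_right hvw hab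
  have hw_le_θ : w * (a + b) ≤ θ * (a + b) := mul_le_mul_of_nonneg_right hw hab
  simp only [selectionLoss_eq_sub]
  split_ifs <;> linarith

lemma monotoneOn_selectionLoss (hab : 0 ≤ a + b) (θ : ℝ) :
    MonotoneOn (fun w => selectionLoss w θ a b) (Ici θ) := by
  intro v (hv : θ ≤ v) w _ hvw
  have hθ_le_v : θ * (a + b) ≤ v * (a + b) := mul_le_mul_of_nonneg_right hv hab
  have hv_le_w : v * (a + b) ≤ w * (a + b) := mul_le_mul_of_nonneg_right hvw hab
  simp only [selectionLoss_eq_sub]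
  split_ifs <;> linarith

end Pointwise

section Integral

variable {Ω : Type*} [MeasurableSpace Ω] {μ : Measure Ω} {A B : Ω → ℝ}

lemma integrable_selectionLoss (hA : Integrable A μ) (hB : Integrable B μ) (w θ : ℝ) :
    Integrable (fun x => selectionLoss w θ (A x) (B x)) μ := by
  have hs : NullMeasurableSet {x | w * (A x + B x) ≤ B x} μ :=
    nullMeasurableSet_le ((hA.add hB).aemeasurable.const_mul w) hB.aemeasurable
  have hgain : Integrable (fun x => B x - θ * (A x + B x)) μ :=
    hB.sub ((hA.add hB).const_mul θ)
  simp only [selectionLoss_eq_sub]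
  exact (hB.const_mul (1 - θ)).sub (hgain.indicator₀ hs)

lemma antitoneOn_integral_selectionLoss (hA : Integrable A μ) (hB : Integrable B μ)
    (hAB : 0 ≤ᵐ[μ] A + B) (θ : ℝ) :
    AntitoneOn (fun w => ∫ x, selectionLoss w θ (A x) (B x) ∂μ) (Iic θ) :=
  fun _ hv _ hw hvw =>
    integral_mono_ae (integrable_selectionLoss hA hB _ θ) (integrable_selectionLoss hA hB _ θ)
      (hAB.mono fun _ hx => antitoneOn_selectionLoss hx θ hv hw hvw)

lemma monotoneOn_integral_selectionLoss (hA : Integrable A μ) (hB : Integrable B μ)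
    (hAB : 0 ≤ᵐ[μ] A + B) (θ : ℝ) :
    MonotoneOn (fun w => ∫ x, selectionLoss w θ (A x) (B x) ∂μ) (Ici θ) :=
  fun _ hv _ hw hvw =>
    integral_mono_ae (integrable_selectionLoss hA hB _ θ) (integrable_selectionLoss hA hB _ θ)
      (hAB.mono fun _ hx => monotoneOn_selectionLoss hx θ hv hw hvw)

end Integral

section ExpectedLoss

variable {f₁ f₂ : ℝ → ℝ}

lemma measurableSet_weighted_sq_le (w : ℝ) :
    MeasurableSet {p : ℝ × ℝ | w * p.1 ^ 2 ≤ (1 - w) * p.2 ^ 2} :=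
  measurableSet_le (by fun_prop) (by fun_prop)

lemma Gfun_eq_setIntegral
    (hA : Integrable fun p : ℝ × ℝ => p.1 ^ 2 * f₁ p.1 * f₂ p.2) (w : ℝ) :
    Gfun f₁ f₂ w =
      ∫ p in {p : ℝ × ℝ | w * p.1 ^ 2 ≤ (1 - w) * p.2 ^ 2}, p.1 ^ 2 * f₁ p.1 * f₂ p.2 := by
  have hs := measurableSet_weighted_sq_le w
  rw [← integral_indicator hs, Measure.volume_eq_prod, integral_prod _ (hA.indicator hs)]
  simp only [Gfun, ← integral_mul_const, indicator_apply, mem_ofPred_eq, ite_mul, zero_mul,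
    mul_right_comm]

lemma Hfun_eq_setIntegral
    (hB : Integrable fun p : ℝ × ℝ => f₁ p.1 * (p.2 ^ 2 * f₂ p.2)) (w : ℝ) :
    Hfun f₁ f₂ w =
      ∫ p in {p : ℝ × ℝ | w * p.1 ^ 2 ≤ (1 - w) * p.2 ^ 2}ᶜ, f₁ p.1 * (p.2 ^ 2 * f₂ p.2) := by
  have hs := (measurableSet_weighted_sq_le w).compl
  rw [← integral_indicator hs, Measure.volume_eq_prod, integral_prod _ (hB.indicator hs)]
  simp only [Hfun, ← integral_mul_const, indicator_apply, mem_compl_iff, mem_ofPred_eq, not_le,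
    ite_mul, zero_mul, mul_comm (f₁ _)]

lemma weighted_sq_add_nonneg (hf₁ : 0 ≤ f₁) (hf₂ : 0 ≤ f₂) :
    0 ≤ (fun p : ℝ × ℝ => p.1 ^ 2 * f₁ p.1 * f₂ p.2) +
      fun p => f₁ p.1 * (p.2 ^ 2 * f₂ p.2) :=
  fun _ => add_nonneg (mul_nonneg (mul_nonneg (sq_nonneg _) (hf₁ _)) (hf₂ _))
    (mul_nonneg (hf₁ _) (mul_nonneg (sq_nonneg _) (hf₂ _)))

-- By homogeneity the joint density can be moved inside `selectionLoss`.
lemma Lfun_eq_integral_selectionLoss (hf₁ : 0 ≤ f₁) (hf₂ : 0 ≤ f₂)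
    (hA : Integrable fun p : ℝ × ℝ => p.1 ^ 2 * f₁ p.1 * f₂ p.2)
    (hB : Integrable fun p : ℝ × ℝ => f₁ p.1 * (p.2 ^ 2 * f₂ p.2)) (w θ : ℝ) :
    Lfun f₁ f₂ w θ =
      ∫ p : ℝ × ℝ, selectionLoss w θ (p.1 ^ 2 * f₁ p.1 * f₂ p.2)
        (f₁ p.1 * (p.2 ^ 2 * f₂ p.2)) := by
  classical
  rw [Lfun, Gfun_eq_setIntegral hA, Hfun_eq_setIntegral hB, ← integral_const_mul,
    ← integral_const_mul, ← integral_piecewise (measurableSet_weighted_sq_le w)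
      (hA.const_mul θ).integrableOn (hB.const_mul (1 - θ)).integrableOn]
  refine integral_congr_ae (.of_forall fun p => ?_)
  calc
    _ = f₁ p.1 * f₂ p.2 * selectionLoss w θ (p.1 ^ 2) (p.2 ^ 2) := by
      simp only [piecewise, mem_ofPred_eq, selectionLoss]
      split_ifs <;> ring
    _ = selectionLoss w θ (f₁ p.1 * f₂ p.2 * p.1 ^ 2) (f₁ p.1 * f₂ p.2 * p.2 ^ 2) :=
      mul_selectionLoss (mul_nonneg (hf₁ p.1) (hf₂ p.2)) ..
    _ = selectionLoss w θ (p.1 ^ 2 * f₁ p.1 * f₂ p.2) (f₁ p.1 * (p.2 ^ 2 * f₂ p.2)) := by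
      congr 1 <;> ring

lemma antitoneOn_Lfun (hf₁ : 0 ≤ f₁) (hf₂ : 0 ≤ f₂)
    (hA : Integrable fun p : ℝ × ℝ => p.1 ^ 2 * f₁ p.1 * f₂ p.2)
    (hB : Integrable fun p : ℝ × ℝ => f₁ p.1 * (p.2 ^ 2 * f₂ p.2)) (θ : ℝ) :
    AntitoneOn (fun w => Lfun f₁ f₂ w θ) (Iic θ) := by
  simp only [Lfun_eq_integral_selectionLoss hf₁ hf₂ hA hB]
  exact antitoneOn_integral_selectionLoss hA hB (.of_forall (weighted_sq_add_nonneg hf₁ hf₂)) θ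

lemma monotoneOn_Lfun (hf₁ : 0 ≤ f₁) (hf₂ : 0 ≤ f₂)
    (hA : Integrable fun p : ℝ × ℝ => p.1 ^ 2 * f₁ p.1 * f₂ p.2)
    (hB : Integrable fun p : ℝ × ℝ => f₁ p.1 * (p.2 ^ 2 * f₂ p.2)) (θ : ℝ) :
    MonotoneOn (fun w => Lfun f₁ f₂ w θ) (Ici θ) := by
  simp only [Lfun_eq_integral_selectionLoss hf₁ hf₂ hA hB]
  exact monotoneOn_integral_selectionLoss hA hB (.of_forall (weighted_sq_add_nonneg hf₁ hf₂)) θ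

end ExpectedLoss

lemma GoodDensity.nonneg {f : ℝ → ℝ} (hf : GoodDensity f) : 0 ≤ f :=
  fun x => (hf.2.1 x).le

lemma GoodDensity.integrable {f : ℝ → ℝ} (hf : GoodDensity f) : Integrable f :=
  .of_integral_ne_zero (hf.2.2.2.1.trans_ne one_ne_zero)

lemma GoodDensity.integrable_sq_mul {f : ℝ → ℝ} (hf : GoodDensity f) :
    Integrable fun x => x ^ 2 * f x :=
  hf.2.2.2.2

theorem stmt9_general {f₁ f₂ : ℝ → ℝ} (hf₁ : 0 ≤ f₁) (hf₂ : 0 ≤ f₂)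
    (hi₁ : Integrable f₁) (hi₂ : Integrable f₂)
    (hm₁ : Integrable fun x => x ^ 2 * f₁ x) (hm₂ : Integrable fun x => x ^ 2 * f₂ x)
    {ι : Type*} [LinearOrder ι] {s : Set ι} {w : ι → ℝ} (hw : MonotoneOn w s) {θ : ℝ}
    {i j : ι} (hi : i ∈ s) (hj : j ∈ s) (hij : i ⋖ j) (hlow : w i ≤ θ) (hhigh : θ ≤ w j) :
    (∀ k ∈ s, k ≤ i → Lfun f₁ f₂ (w i) θ ≤ Lfun f₁ f₂ (w k) θ) ∧
    (∀ k ∈ s, j ≤ k → Lfun f₁ f₂ (w j) θ ≤ Lfun f₁ f₂ (w k) θ) ∧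
    (∀ k ∈ s, min (Lfun f₁ f₂ (w i) θ) (Lfun f₁ f₂ (w j) θ) ≤ Lfun f₁ f₂ (w k) θ) := by
  have hA := hm₁.mul_prod hi₂
  have hB := hi₁.mul_prod hm₂
  have hbelow : ∀ k ∈ s, k ≤ i → Lfun f₁ f₂ (w i) θ ≤ Lfun f₁ f₂ (w k) θ := fun k hk hki =>
    have hwki := hw hk hi hki
    antitoneOn_Lfun hf₁ hf₂ hA hB θ (hwki.trans hlow) hlow hwki
  have habove : ∀ k ∈ s, j ≤ k → Lfun f₁ f₂ (w j) θ ≤ Lfun f₁ f₂ (w k) θ := fun k hk hjk =>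
    have hwjk := hw hj hk hjk
    monotoneOn_Lfun hf₁ hf₂ hA hB θ hhigh (hhigh.trans hwjk) hwjk
  refine ⟨hbelow, habove, fun k hk => ?_⟩
  rcases le_or_gt k i with hki | hik
  · exact min_le_of_left_le (hbelow k hk hki)
  · exact min_le_of_right_le (habove k hk (hij.ge_of_gt hik))

/-- Let `0 < w₁ < ⋯ < wₙ < 1` and `θ ∈ (0,1)`. If `m̃ ∈ {1,…,n−1}` is
such that `w_{m̃} ≤ θ < w_{m̃+1}`, then `L(w_{m̃}∣θ) ≤ L(w_m∣θ)` for every `m < m̃`, and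
`L(w_{m̃+1}∣θ) ≤ L(w_m∣θ)` for every `m > m̃+1`. Hence the minimum of `L(w_m∣θ)` over
`m ∈ {1,…,n}` is attained at `m̃` or `m̃+1`. -/
theorem stmt9 (f₁ f₂ : ℝ → ℝ) (hf₁ : GoodDensity f₁) (hf₂ : GoodDensity f₂)
    (n : ℕ) (w : ℕ → ℝ)
    (hw : ∀ i, 1 ≤ i → i ≤ n → w i ∈ Set.Ioo (0 : ℝ) 1)
    (hmono : ∀ i j, 1 ≤ i → i < j → j ≤ n → w i < w j)
    (θ : ℝ) (hθ : θ ∈ Set.Ioo (0 : ℝ) 1)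
    (mt : ℕ) (hmt1 : 1 ≤ mt) (hmt2 : mt + 1 ≤ n)
    (hlow : w mt ≤ θ) (hhigh : θ < w (mt + 1)) :
    (∀ m, 1 ≤ m → m < mt → Lfun f₁ f₂ (w mt) θ ≤ Lfun f₁ f₂ (w m) θ) ∧
    (∀ m, mt + 1 < m → m ≤ n → Lfun f₁ f₂ (w (mt + 1)) θ ≤ Lfun f₁ f₂ (w m) θ) ∧
    (∀ m, 1 ≤ m → m ≤ n →
      min (Lfun f₁ f₂ (w mt) θ) (Lfun f₁ f₂ (w (mt + 1)) θ) ≤ Lfun f₁ f₂ (w m) θ) := by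
  have hw_mono : MonotoneOn w (Icc 1 n) :=
    StrictMonoOn.monotoneOn fun i hi j hj hij => hmono i j hi.1 hij hj.2
  obtain ⟨hbelow, habove, hmin⟩ := stmt9_general hf₁.nonneg hf₂.nonneg hf₁.integrable
    hf₂.integrable hf₁.integrable_sq_mul hf₂.integrable_sq_mul hw_mono (i := mt) (j := mt + 1)
    ⟨hmt1, by lia⟩ ⟨by lia, hmt2⟩ (Order.covBy_add_one mt) hlow hhigh.le
  exact ⟨fun m h1 hm => hbelow m ⟨h1, by lia⟩ hm.le, fun m hm hn => habove m ⟨by lia, hn⟩ hm.le,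
    fun m h1 hn => hmin m ⟨h1, hn⟩⟩
end

section
/- For any two weights 0 < w < w′ < 1, the unique θ* with L(w | θ*) = L(w′ | θ*) is given explicitly by θ* = (H(w′) − H(w)) / ( (H(w′) − H(w)) + (G(w) − G(w′)) ), and both the numerator and the denominator of this expression are strictly positive. -/
open MeasureTheory Set

/-!
For nonnegative costs `a = X₁²` and `b = X₂²`, the condition `(1 - w) b < w a` reads
`b < w (a + b)`, so the event on which it holds grows with `w`. Both costs are nonzero where this
event for `w'` exceeds the one for `w`, so passing from `w` to `w'` strictly increases `H` and
strictly decreases `G` as soon as this difference has positive probability; for independent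
variables with positive densities it does, because it contains a nonempty open cone. Hence
`L(w ∣ θ) - L(w' ∣ θ)` is affine in `θ` with positive slope, and has exactly one zero.
-/

theorem mul_add_one_sub_mul_eq_iff {K : Type*} [Field K] {g h g' h' θ : K}
    (hslope : (h' - h) + (g - g') ≠ 0) :
    θ * g + (1 - θ) * h = θ * g' + (1 - θ) * h' ↔ θ = (h' - h) / ((h' - h) + (g - g')) := by
  rw [eq_div_iff hslope]
  constructor <;> intro heq <;> linear_combination heq

theorem setIntegral_lt_setIntegral_of_subset {Ω : Type*} [MeasurableSpace Ω] {μ : Measure Ω}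
    {f : Ω → ℝ} {s t : Set Ω} (hs : NullMeasurableSet s μ) (hst : s ⊆ t)
    (hf : 0 ≤ᵐ[μ.restrict (t \ s)] f) (hft : IntegrableOn f t μ)
    (hpos : 0 < μ (Function.support f ∩ (t \ s))) :
    ∫ ω in s, f ω ∂μ < ∫ ω in t, f ω ∂μ := by
  rw [← sub_pos, ← setIntegral_sdiff₀ hs hft hst]
  exact (setIntegral_pos_iff_support_of_nonneg_ae hf (hft.mono_set sdiff_subset)).2 hpos

section WeightedChoice

variable {Ω : Type*} {a b : Ω → ℝ} {w w' : ℝ}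

/-- The event that the second of two costs `a` and `b` is incurred under weight `w`. For `a = X₁²`
and `b = X₂²` its indicator is the one in `H(w)`, and that of its complement the one in `G(w)`. -/
def secondRegion (a b : Ω → ℝ) (w : ℝ) : Set Ω :=
  {ω | (1 - w) * b ω < w * a ω}

theorem monotone_secondRegion (ha : 0 ≤ a) (hb : 0 ≤ b) : Monotone (secondRegion a b) := by
  intro w w' h ω (hω : (1 - w) * b ω < w * a ω)
  calc (1 - w') * b ω ≤ (1 - w) * b ω := by gcongr; exact hb ω
    _ < w * a ω := hω
    _ ≤ w' * a ω := by gcongr; exact ha ω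

theorem fst_pos_of_mem_secondRegion (ha : 0 ≤ a) (hb : 0 ≤ b) (hw : w ≤ 1) {ω : Ω}
    (hω : ω ∈ secondRegion a b w) : 0 < a ω := by
  have hlt : 0 < w * a ω := (mul_nonneg (sub_nonneg.2 hw) (hb ω)).trans_lt hω
  exact (ha ω).lt_of_ne' (right_ne_zero_of_mul hlt.ne')

theorem snd_pos_of_notMem_secondRegion (hb : 0 ≤ b) (hw : 0 < w) {ω : Ω} (ha : 0 < a ω)
    (hω : ω ∉ secondRegion a b w) : 0 < b ω := by
  have hlt : 0 < (1 - w) * b ω := (mul_pos hw ha).trans_le (not_lt.1 hω)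
  exact (hb ω).lt_of_ne' (right_ne_zero_of_mul hlt.ne')

variable [MeasurableSpace Ω] {μ : Measure Ω}

theorem secondRegion_subset_of_measure_diff_pos (ha : 0 ≤ a) (hb : 0 ≤ b)
    (hdiff : 0 < μ (secondRegion a b w' \ secondRegion a b w)) :
    secondRegion a b w ⊆ secondRegion a b w' := by
  rcases le_total w w' with h | h
  · exact monotone_secondRegion ha hb h
  · rw [sdiff_eq_empty.2 (monotone_secondRegion ha hb h), measure_empty] at hdiff
    exact absurd hdiff (lt_irrefl 0)

theorem nullMeasurableSet_secondRegion (ha : AEMeasurable a μ) (hb : AEMeasurable b μ) (w : ℝ) :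
    NullMeasurableSet (secondRegion a b w) μ :=
  nullMeasurableSet_lt (hb.const_mul (1 - w)) (ha.const_mul w)

/-- The contribution of the second cost under weight `w`; this is `H(w)` for an arbitrary joint law
of the costs. -/
noncomputable def secondLoss (a b : Ω → ℝ) (μ : Measure Ω) (w : ℝ) : ℝ :=
  ∫ ω in secondRegion a b w, b ω ∂μ

/-- The contribution of the first cost under weight `w`; this is `G(w)` for an arbitrary joint law
of the costs. -/
noncomputable def firstLoss (a b : Ω → ℝ) (μ : Measure Ω) (w : ℝ) : ℝ :=
  ∫ ω in (secondRegion a b w)ᶜ, a ω ∂μ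

/-- The expected loss `L(w ∣ θ)` for an arbitrary joint law of the costs. -/
noncomputable def expectedLoss (a b : Ω → ℝ) (μ : Measure Ω) (w θ : ℝ) : ℝ :=
  θ * firstLoss a b μ w + (1 - θ) * secondLoss a b μ w

theorem secondLoss_lt_secondLoss (ha : 0 ≤ a) (hb : 0 ≤ b) (ham : AEMeasurable a μ)
    (hbi : Integrable b μ) (hw : 0 < w) (hw' : w' ≤ 1)
    (hdiff : 0 < μ (secondRegion a b w' \ secondRegion a b w)) :
    secondLoss a b μ w < secondLoss a b μ w' := by
  refine setIntegral_lt_setIntegral_of_subset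
    (nullMeasurableSet_secondRegion ham hbi.aemeasurable w)
    (secondRegion_subset_of_measure_diff_pos ha hb hdiff) (.of_forall hb) hbi.integrableOn ?_
  have hsupp : secondRegion a b w' \ secondRegion a b w ⊆ Function.support b := fun ω hω =>
    (snd_pos_of_notMem_secondRegion hb hw (fst_pos_of_mem_secondRegion ha hb hw' hω.1) hω.2).ne'
  rwa [inter_eq_right.2 hsupp]

theorem firstLoss_lt_firstLoss (ha : 0 ≤ a) (hb : 0 ≤ b) (hai : Integrable a μ)
    (hbm : AEMeasurable b μ) (hw' : w' ≤ 1)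
    (hdiff : 0 < μ (secondRegion a b w' \ secondRegion a b w)) :
    firstLoss a b μ w' < firstLoss a b μ w := by
  refine setIntegral_lt_setIntegral_of_subset
    (nullMeasurableSet_secondRegion hai.aemeasurable hbm w').compl
    (compl_subset_compl.2 (secondRegion_subset_of_measure_diff_pos ha hb hdiff))
    (.of_forall ha) hai.integrableOn ?_
  have hsupp : secondRegion a b w' \ secondRegion a b w ⊆ Function.support a := fun ω hω =>
    (fst_pos_of_mem_secondRegion ha hb hw' hω.1).ne'
  rwa [compl_sdiff_compl, inter_eq_right.2 hsupp]

theorem stmt11_general (ha : 0 ≤ a) (hb : 0 ≤ b) (hai : Integrable a μ) (hbi : Integrable b μ)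
    (hw : 0 < w) (hw' : w' ≤ 1)
    (hdiff : 0 < μ (secondRegion a b w' \ secondRegion a b w)) :
    0 < secondLoss a b μ w' - secondLoss a b μ w ∧
    0 < (secondLoss a b μ w' - secondLoss a b μ w) + (firstLoss a b μ w - firstLoss a b μ w') ∧
    ∀ θ : ℝ, expectedLoss a b μ w θ = expectedLoss a b μ w' θ ↔
      θ = (secondLoss a b μ w' - secondLoss a b μ w) /
        ((secondLoss a b μ w' - secondLoss a b μ w) +
          (firstLoss a b μ w - firstLoss a b μ w')) := by
  have hsecond := sub_pos.2 (secondLoss_lt_secondLoss ha hb hai.aemeasurable hbi hw hw' hdiff)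
  have hfirst := sub_pos.2 (firstLoss_lt_firstLoss ha hb hai hbi.aemeasurable hw' hdiff)
  have hslope := add_pos hsecond hfirst
  exact ⟨hsecond, hslope, fun _ => mul_add_one_sub_mul_eq_iff hslope.ne'⟩

end WeightedChoice

theorem measure_secondRegion_sq_diff_pos {μ : Measure (ℝ × ℝ)} [μ.IsOpenPosMeasure] {w w' : ℝ}
    (hw : 0 ≤ w) (hww' : w < w') (hw' : w' ≤ 1) :
    0 < μ (secondRegion (fun p => p.1 ^ 2) (fun p => p.2 ^ 2) w' \
      secondRegion (fun p => p.1 ^ 2) (fun p => p.2 ^ 2) w) := by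
  let cone : Set (ℝ × ℝ) :=
    {p | (1 - w') * p.2 ^ 2 < w' * p.1 ^ 2} ∩ {p | w * p.1 ^ 2 < (1 - w) * p.2 ^ 2}
  have hopen : IsOpen cone :=
    (isOpen_lt (by fun_prop) (by fun_prop)).inter (isOpen_lt (by fun_prop) (by fun_prop))
  have hne : cone.Nonempty := by
    obtain ⟨v, hwv, hvw'⟩ := exists_between hww'
    have hv₀ : 0 ≤ v := by linarith
    have hv₁ : 0 ≤ 1 - v := by linarith
    -- At this point `X₂² / (X₁² + X₂²)` equals `v`.
    refine ⟨(√(1 - v), √v), ?_, ?_⟩ <;>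
    · simp only [mem_ofPred_eq, Real.sq_sqrt hv₀, Real.sq_sqrt hv₁]
      linarith
  have hsub : cone ⊆ secondRegion (fun p => p.1 ^ 2) (fun p => p.2 ^ 2) w' \
      secondRegion (fun p => p.1 ^ 2) (fun p => p.2 ^ 2) w := by
    intro p hp
    have hlt : w * p.1 ^ 2 < (1 - w) * p.2 ^ 2 := hp.2
    exact ⟨hp.1, hlt.not_gt⟩
  exact (hopen.measure_pos μ hne).trans_le (measure_mono hsub)

section DensityMeasure

variable {α β : Type*} [MeasureSpace α] [MeasureSpace β]

/-- The law with density `f` relative to `volume`; negative values of `f` are truncated to `0`. -/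
noncomputable def densityMeasure (f : α → ℝ) : Measure α :=
  volume.withDensity fun x => ENNReal.ofReal (f x)

instance [SFinite (volume : Measure α)] (f : α → ℝ) : SFinite (densityMeasure f) :=
  inferInstanceAs (SFinite (volume.withDensity _))

variable {f : α → ℝ}

theorem integral_densityMeasure (hf : AEMeasurable f) (hf₀ : 0 ≤ f) (g : α → ℝ) :
    ∫ x, g x ∂densityMeasure f = ∫ x, g x * f x := by
  rw [densityMeasure, integral_withDensity_eq_integral_toReal_smul₀ hf.ennreal_ofReal
    (.of_forall fun _ => ENNReal.ofReal_lt_top)]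
  simp only [ENNReal.toReal_ofReal (hf₀ _), smul_eq_mul, mul_comm]

theorem integrable_densityMeasure_iff (hf : AEMeasurable f) (hf₀ : 0 ≤ f) {g : α → ℝ} :
    Integrable g (densityMeasure f) ↔ Integrable fun x => g x * f x := by
  rw [densityMeasure, integrable_withDensity_iff_integrable_smul₀' hf.ennreal_ofReal
    (.of_forall fun _ => ENNReal.ofReal_lt_top)]
  simp only [ENNReal.toReal_ofReal (hf₀ _), smul_eq_mul, mul_comm]

theorem isOpenPosMeasure_densityMeasure [TopologicalSpace α]
    [(volume : Measure α).IsOpenPosMeasure] (hf : AEMeasurable f) (hpos : ∀ x, 0 < f x) :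
    (densityMeasure f).IsOpenPosMeasure :=
  (withDensity_absolutelyContinuous' hf.ennreal_ofReal
    (.of_forall fun x => (ENNReal.ofReal_pos.2 (hpos x)).ne')).isOpenPosMeasure

theorem integral_prod_densityMeasure [SFinite (volume : Measure α)]
    [SFinite (volume : Measure β)] {f₁ : α → ℝ} {f₂ : β → ℝ} (hf₁ : AEMeasurable f₁)
    (hf₁₀ : 0 ≤ f₁) (hf₂ : AEMeasurable f₂) (hf₂₀ : 0 ≤ f₂) {F : α × β → ℝ}
    (hF : Integrable F ((densityMeasure f₁).prod (densityMeasure f₂))) :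
    ∫ p, F p ∂(densityMeasure f₁).prod (densityMeasure f₂) =
      ∫ x, (∫ y, F (x, y) * f₂ y) * f₁ x := by
  simp only [integral_prod _ hF, integral_densityMeasure hf₁ hf₁₀,
    integral_densityMeasure hf₂ hf₂₀]

end DensityMeasure

namespace GoodDensity

variable {f f₁ f₂ : ℝ → ℝ}

theorem aemeasurable (hf : GoodDensity f) : AEMeasurable f :=
  hf.1.aemeasurable

theorem pos (hf : GoodDensity f) (x : ℝ) : 0 < f x :=
  hf.2.1 x

theorem nonneg_s11 (hf : GoodDensity f) : 0 ≤ f :=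
  fun x => (hf.pos x).le

theorem isFiniteMeasure (hf : GoodDensity f) : IsFiniteMeasure (densityMeasure f) :=
  isFiniteMeasure_withDensity_ofReal (integrable_of_integral_eq_one hf.2.2.2.1).hasFiniteIntegral

theorem integrable_sq (hf : GoodDensity f) : Integrable (fun x => x ^ 2) (densityMeasure f) :=
  (integrable_densityMeasure_iff hf.aemeasurable hf.nonneg_s11).2 hf.2.2.2.2

theorem integrable_fst_sq (hf₁ : GoodDensity f₁) (hf₂ : GoodDensity f₂) :
    Integrable (fun p : ℝ × ℝ => p.1 ^ 2) ((densityMeasure f₁).prod (densityMeasure f₂)) :=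
  have := hf₂.isFiniteMeasure
  hf₁.integrable_sq.comp_fst _

theorem integrable_snd_sq (hf₁ : GoodDensity f₁) (hf₂ : GoodDensity f₂) :
    Integrable (fun p : ℝ × ℝ => p.2 ^ 2) ((densityMeasure f₁).prod (densityMeasure f₂)) :=
  have := hf₁.isFiniteMeasure
  hf₂.integrable_sq.comp_snd _

theorem isOpenPosMeasure_prod (hf₁ : GoodDensity f₁) (hf₂ : GoodDensity f₂) :
    ((densityMeasure f₁).prod (densityMeasure f₂)).IsOpenPosMeasure :=
  have := isOpenPosMeasure_densityMeasure hf₁.aemeasurable hf₁.pos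
  have := isOpenPosMeasure_densityMeasure hf₂.aemeasurable hf₂.pos
  inferInstance

theorem Hfun_eq_secondLoss (hf₁ : GoodDensity f₁) (hf₂ : GoodDensity f₂) (w : ℝ) :
    Hfun f₁ f₂ w = secondLoss (fun p => p.1 ^ 2) (fun p => p.2 ^ 2)
      ((densityMeasure f₁).prod (densityMeasure f₂)) w := by
  have hint₁ := integrable_fst_sq hf₁ hf₂
  have hint₂ := integrable_snd_sq hf₁ hf₂
  have hregion := nullMeasurableSet_secondRegion hint₁.aemeasurable hint₂.aemeasurable w
  rw [secondLoss, ← integral_indicator₀ hregion, integral_prod_densityMeasure hf₁.aemeasurable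
    hf₁.nonneg_s11 hf₂.aemeasurable hf₂.nonneg_s11 (hint₂.indicator₀ hregion)]
  simp only [Hfun, indicator_apply, secondRegion, mem_ofPred_eq]

theorem Gfun_eq_firstLoss (hf₁ : GoodDensity f₁) (hf₂ : GoodDensity f₂) (w : ℝ) :
    Gfun f₁ f₂ w = firstLoss (fun p => p.1 ^ 2) (fun p => p.2 ^ 2)
      ((densityMeasure f₁).prod (densityMeasure f₂)) w := by
  have hint₁ := integrable_fst_sq hf₁ hf₂
  have hint₂ := integrable_snd_sq hf₁ hf₂
  have hregion :=
    (nullMeasurableSet_secondRegion hint₁.aemeasurable hint₂.aemeasurable w).compl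
  rw [firstLoss, ← integral_indicator₀ hregion, integral_prod_densityMeasure hf₁.aemeasurable
    hf₁.nonneg_s11 hf₂.aemeasurable hf₂.nonneg_s11 (hint₁.indicator₀ hregion)]
  simp only [Gfun, indicator_apply, secondRegion, mem_compl_iff, mem_ofPred_eq, not_lt]

theorem Lfun_eq_expectedLoss (hf₁ : GoodDensity f₁) (hf₂ : GoodDensity f₂) (w θ : ℝ) :
    Lfun f₁ f₂ w θ = expectedLoss (fun p => p.1 ^ 2) (fun p => p.2 ^ 2)
      ((densityMeasure f₁).prod (densityMeasure f₂)) w θ := by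
  rw [Lfun, Hfun_eq_secondLoss hf₁ hf₂, Gfun_eq_firstLoss hf₁ hf₂, expectedLoss]

end GoodDensity

/-- For any `0 < w < w′ < 1`, the unique `θ*` with
`L(w∣θ*) = L(w′∣θ*)` is given by
`θ* = (H(w′) − H(w)) / ((H(w′) − H(w)) + (G(w) − G(w′)))`, and both the numerator and the
denominator of this expression are strictly positive. -/
theorem stmt11 (f₁ f₂ : ℝ → ℝ) (hf₁ : GoodDensity f₁) (hf₂ : GoodDensity f₂)
    (w w' : ℝ) (hw : 0 < w) (hww' : w < w') (hw' : w' < 1) :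
    0 < Hfun f₁ f₂ w' - Hfun f₁ f₂ w ∧
    0 < (Hfun f₁ f₂ w' - Hfun f₁ f₂ w) + (Gfun f₁ f₂ w - Gfun f₁ f₂ w') ∧
    Lfun f₁ f₂ w
        ((Hfun f₁ f₂ w' - Hfun f₁ f₂ w) /
          ((Hfun f₁ f₂ w' - Hfun f₁ f₂ w) + (Gfun f₁ f₂ w - Gfun f₁ f₂ w'))) =
      Lfun f₁ f₂ w'
        ((Hfun f₁ f₂ w' - Hfun f₁ f₂ w) /
          ((Hfun f₁ f₂ w' - Hfun f₁ f₂ w) + (Gfun f₁ f₂ w - Gfun f₁ f₂ w'))) ∧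
    ∀ θ : ℝ, Lfun f₁ f₂ w θ = Lfun f₁ f₂ w' θ →
      θ = (Hfun f₁ f₂ w' - Hfun f₁ f₂ w) /
          ((Hfun f₁ f₂ w' - Hfun f₁ f₂ w) + (Gfun f₁ f₂ w - Gfun f₁ f₂ w')) := by
  have := hf₁.isOpenPosMeasure_prod hf₂
  simp only [hf₁.Lfun_eq_expectedLoss hf₂, hf₁.Hfun_eq_secondLoss hf₂, hf₁.Gfun_eq_firstLoss hf₂]
  obtain ⟨hnum, hden, hiff⟩ := stmt11_general (fun _ => sq_nonneg _) (fun _ => sq_nonneg _)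
    (hf₁.integrable_fst_sq hf₂) (hf₁.integrable_snd_sq hf₂) hw hw'.le
    (measure_secondRegion_sq_diff_pos hw.le hww' hw'.le)
  exact ⟨hnum, hden, (hiff _).2 rfl, fun θ => (hiff θ).1⟩
end

section
/- Let 0 < w₁ < w₂ < ⋯ < wₙ < 1 be given weights. Then there exist thresholds 0 = θ₀ < θ₁ < ⋯ < θₙ = 1 such that for every m ∈ {1,…,n} and every θ in the open interval (θ_{m−1}, θ_m), L(w_m | θ) ≤ L(w_k | θ) for all k ∈ {1,…,n}; moreover for each interior threshold m ∈ {1,…,n−1}, L(w_m | θ_m) = L(w_{m+1} | θ_m). That is, the receiver's best response to a weighted-quadratic disclosure policy with ordered weights is a monotone partition preference disclosure policy. -/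
open MeasureTheory Set

/-!
In state `(x₁, x₂)` the policy with weight `w` leaves the residual loss `(1 - θ) x₂²` if
`(1 - w) x₂² < w x₁²` and `θ x₁²` otherwise. For `w = θ` this is the smaller of the two numbers in
every state, and a policy with another weight picks the larger one on a nonempty open cone of
states. Hence `v ↦ L(v ∣ θ)` is uniquely minimized at `v = θ`, as for a strictly proper scoring
rule. Since `L` is affine in `θ`, this forces `L(w ∣ ·)` and `L(v ∣ ·)` with `w < v` to cross
exactly once, at a point of `(w, v)`. The crossings of consecutive weights are the thresholds: they
interlace with the weights, so they increase, and between `θ_{m-1}` and `θ_m` the losses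
`L(w_k ∣ θ)` are antitone in `k ≤ m` and monotone in `k ≥ m`.
-/

section Crossing

variable {T β : Type*} [Preorder T]

/-- Single crossing of two functions at `θ`: `p` is the smaller one up to `θ`, and `q` is the
smaller one from `θ` on. -/
def CrossesAt [LE β] (p q : T → β) (θ : T) : Prop :=
  (∀ t ≤ θ, p t ≤ q t) ∧ ∀ t, θ ≤ t → q t ≤ p t

lemma CrossesAt.eq [PartialOrder β] {p q : T → β} {θ : T} (h : CrossesAt p q θ) : p θ = q θ :=
  (h.1 θ le_rfl).antisymm (h.2 θ le_rfl)

variable [Preorder β] {ℓ : ℕ → T → β} {θ : ℕ → T} {n m k : ℕ} {t : T}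

lemma antitoneOn_of_crossesAt (hθ : MonotoneOn θ (Iic n))
    (hcross : ∀ i, 1 ≤ i → i < n → CrossesAt (ℓ i) (ℓ (i + 1)) (θ i))
    (hmn : m ≤ n) (ht : θ (m - 1) ≤ t) : AntitoneOn (fun i ↦ ℓ i t) (Icc 1 m) := by
  refine antitoneOn_of_add_one_le ordConnected_Icc fun i _ hi hi' ↦ ?_
  have him : i + 1 ≤ m := hi'.2
  have hle : θ i ≤ θ (m - 1) :=
    hθ (mem_Iic.2 (by lia)) (mem_Iic.2 (by lia)) (by lia)
  exact (hcross i hi.1 (by lia)).2 t (hle.trans ht)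

lemma monotoneOn_of_crossesAt (hθ : MonotoneOn θ (Iic n))
    (hcross : ∀ i, 1 ≤ i → i < n → CrossesAt (ℓ i) (ℓ (i + 1)) (θ i))
    (hm : 1 ≤ m) (ht : t ≤ θ m) : MonotoneOn (fun i ↦ ℓ i t) (Icc m n) := by
  refine monotoneOn_of_le_add_one ordConnected_Icc fun i _ hi hi' ↦ ?_
  have hle : θ m ≤ θ i := hθ (hi.1.trans hi.2) hi.2 hi.1
  exact (hcross i (hm.trans hi.1) hi'.2).1 t (ht.trans hle)

lemma le_of_crossesAt (hθ : MonotoneOn θ (Iic n))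
    (hcross : ∀ i, 1 ≤ i → i < n → CrossesAt (ℓ i) (ℓ (i + 1)) (θ i))
    (hm : m ∈ Icc 1 n) (hk : k ∈ Icc 1 n) (ht : t ∈ Icc (θ (m - 1)) (θ m)) :
    ℓ m t ≤ ℓ k t := by
  rcases le_total k m with hkm | hmk
  · exact antitoneOn_of_crossesAt hθ hcross hm.2 ht.1 ⟨hk.1, hkm⟩ (right_mem_Icc.2 hm.1) hkm
  · exact monotoneOn_of_crossesAt hθ hcross hm.1 ht.2 (left_mem_Icc.2 hm.2) ⟨hmk, hk.2⟩ hmk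

end Crossing

lemma exists_eq_mul_sub_of_affine {a b x y : ℝ} (hxy : x < y)
    (hx : x * a + (1 - x) * b < 0) (hy : 0 < y * a + (1 - y) * b) :
    ∃ c > 0, ∃ θ ∈ Ioo x y, ∀ t, t * a + (1 - t) * b = c * (t - θ) := by
  have hc : 0 < a - b := by
    by_contra! hc
    nlinarith
  have hroot (t : ℝ) : t * a + (1 - t) * b = (a - b) * (t - -b / (a - b)) := by
    field_simp
    ring
  rw [hroot] at hx hy
  exact ⟨a - b, hc, -b / (a - b), ⟨sub_neg.1 (neg_of_mul_neg_right hx hc.le),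
    sub_pos.1 ((mul_pos_iff_of_pos_left hc).1 hy)⟩, hroot⟩

lemma exists_strictMonoOn_interlacing {α : Type*} [Preorder α] {n : ℕ} (hn : 1 ≤ n) {a b : α}
    {w : ℕ → α} (ha : a < w 1) (hb : w n < b) {P : ℕ → α → Prop}
    (hP : ∀ m, 1 ≤ m → m < n → ∃ x ∈ Ioo (w m) (w (m + 1)), P m x) :
    ∃ θ : ℕ → α, θ 0 = a ∧ θ n = b ∧ StrictMonoOn θ (Iic n) ∧
      ∀ m, 1 ≤ m → m < n → P m (θ m) := by
  have : Nonempty α := ⟨a⟩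
  choose! x hx hPx using hP
  let θ : ℕ → α := fun m ↦ if m = 0 then a else if m < n then x m else b
  have θ_zero : θ 0 = a := if_pos rfl
  have θ_last : θ n = b := by simp [θ, show n ≠ 0 by lia]
  have θ_mid (m : ℕ) (hm : 1 ≤ m) (hmn : m < n) : θ m = x m := by
    simp [θ, show m ≠ 0 by lia, hmn]
  have θ_lt (m : ℕ) (hmn : m < n) : θ m < w (m + 1) := by
    rcases m.eq_zero_or_pos with rfl | hm
    · rwa [θ_zero]
    · exact θ_mid m hm hmn ▸ (hx m hm hmn).2
  have lt_θ (m : ℕ) (hm : 1 ≤ m) (hmn : m ≤ n) : w m < θ m := by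
    rcases hmn.eq_or_lt with rfl | hmn
    · rwa [θ_last]
    · exact θ_mid m hm hmn ▸ (hx m hm hmn).1
  exact ⟨θ, θ_zero, θ_last,
    strictMonoOn_Iic_of_lt_succ fun m hm ↦ (θ_lt m hm).trans (lt_θ (m + 1) m.succ_pos hm),
    fun m hm hmn ↦ θ_mid m hm hmn ▸ hPx m hm hmn⟩

lemma integral_lt_integral_of_le_of_lt_on_isOpen {X : Type*} [TopologicalSpace X]
    [MeasurableSpace X] {μ : Measure X} [μ.IsOpenPosMeasure] {f g : X → ℝ} (hf : Integrable f μ)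
    (hg : Integrable g μ) (hle : ∀ x, f x ≤ g x) {U : Set X} (hU : IsOpen U) (hne : U.Nonempty)
    (hlt : ∀ x ∈ U, f x < g x) : ∫ x, f x ∂μ < ∫ x, g x ∂μ := by
  rw [← sub_pos, ← integral_sub hg hf, integral_pos_iff_support_of_nonneg
    (fun x ↦ sub_nonneg.2 (hle x)) (hg.sub hf)]
  exact (hU.measure_pos μ hne).trans_le (measure_mono fun x hx ↦ (sub_pos.2 (hlt x hx)).ne')

section ResidualLoss

variable {w v θ : ℝ} {p : ℝ × ℝ}

/-- The states `(x₁, x₂)` in which the policy with weight `w` discloses the first coordinate, so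
that the receiver is left with the loss from the second one. -/
def firstDisclosed (w : ℝ) : Set (ℝ × ℝ) :=
  {p | (1 - w) * p.2 ^ 2 < w * p.1 ^ 2}

/-- The loss of a receiver with preference `θ` in state `(x₁, x₂)` under the policy with weight `w`;
its expectation is `L(w ∣ θ)`. -/
noncomputable def residualLoss (w θ : ℝ) (p : ℝ × ℝ) : ℝ :=
  θ * (firstDisclosed w)ᶜ.indicator (fun q ↦ q.1 ^ 2) p +
    (1 - θ) * (firstDisclosed w).indicator (fun q ↦ q.2 ^ 2) p

lemma isOpen_firstDisclosed (w : ℝ) : IsOpen (firstDisclosed w) :=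
  isOpen_lt (by fun_prop) (by fun_prop)

lemma residualLoss_of_mem (θ : ℝ) (hp : p ∈ firstDisclosed w) :
    residualLoss w θ p = (1 - θ) * p.2 ^ 2 := by
  simp [residualLoss, hp]

lemma residualLoss_of_notMem (θ : ℝ) (hp : p ∉ firstDisclosed w) :
    residualLoss w θ p = θ * p.1 ^ 2 := by
  simp [residualLoss, hp]

lemma residualLoss_self (w : ℝ) (p : ℝ × ℝ) :
    residualLoss w w p = min ((1 - w) * p.2 ^ 2) (w * p.1 ^ 2) := by
  by_cases hp : p ∈ firstDisclosed w
  · rw [residualLoss_of_mem w hp, min_eq_left (le_of_lt hp)]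
  · rw [residualLoss_of_notMem w hp, min_eq_right (not_lt.1 hp)]

lemma residualLoss_self_le (w v : ℝ) (p : ℝ × ℝ) : residualLoss w w p ≤ residualLoss v w p := by
  rw [residualLoss_self]
  by_cases hp : p ∈ firstDisclosed v
  · exact residualLoss_of_mem w hp ▸ min_le_left ..
  · exact residualLoss_of_notMem w hp ▸ min_le_right ..

/-- For `a < b`, the open cone of states in which the policy with weight `b` discloses the first
coordinate and the one with weight `a` the second, ties at `a` excluded. -/
def disagreementCone (a b : ℝ) : Set (ℝ × ℝ) :=
  {p | a * p.1 ^ 2 < (1 - a) * p.2 ^ 2} ∩ firstDisclosed b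

lemma isOpen_disagreementCone (a b : ℝ) : IsOpen (disagreementCone a b) :=
  (isOpen_lt (by fun_prop) (by fun_prop)).inter (isOpen_firstDisclosed b)

lemma disagreementCone_nonempty {a b : ℝ} (ha : 0 ≤ a) (hab : a < b) (hb : b ≤ 1) :
    (disagreementCone a b).Nonempty := by
  obtain ⟨u, hau, hub⟩ := exists_between hab
  have hu : 0 ≤ u := ha.trans hau.le
  have hu' : 0 ≤ 1 - u := by linarith
  refine ⟨(√(1 - u), √u), ?_, ?_⟩
  · simp only [mem_ofPred_eq, Real.sq_sqrt hu, Real.sq_sqrt hu']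
    linarith
  · simp only [firstDisclosed, mem_ofPred_eq, Real.sq_sqrt hu, Real.sq_sqrt hu']
    linarith

lemma residualLoss_self_lt_of_mem_left (hp : p ∈ disagreementCone w v) :
    residualLoss w w p < residualLoss v w p := by
  rw [residualLoss_self, residualLoss_of_mem w hp.2]
  exact min_lt_of_right_lt hp.1

lemma residualLoss_self_lt_of_mem_right (hp : p ∈ disagreementCone v w) :
    residualLoss w w p < residualLoss v w p := by
  have hlt : v * p.1 ^ 2 < (1 - v) * p.2 ^ 2 := hp.1
  rw [residualLoss_self, residualLoss_of_notMem w hlt.not_gt]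
  exact min_lt_of_left_lt hp.2

lemma exists_isOpen_residualLoss_self_lt (hw : w ∈ Icc 0 1) (hv : v ∈ Icc 0 1) (hwv : w ≠ v) :
    ∃ U : Set (ℝ × ℝ), IsOpen U ∧ U.Nonempty ∧
      ∀ p ∈ U, residualLoss w w p < residualLoss v w p := by
  rcases hwv.lt_or_gt with h | h
  · exact ⟨disagreementCone w v, isOpen_disagreementCone w v,
      disagreementCone_nonempty hw.1 h hv.2, fun _ ↦ residualLoss_self_lt_of_mem_left⟩
  · exact ⟨disagreementCone v w, isOpen_disagreementCone v w,
      disagreementCone_nonempty hv.1 h hw.2, fun _ ↦ residualLoss_self_lt_of_mem_right⟩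

section Integral

variable {μ : Measure (ℝ × ℝ)} (h₁ : Integrable (fun p ↦ p.1 ^ 2) μ)
  (h₂ : Integrable (fun p ↦ p.2 ^ 2) μ)

include h₁ h₂

lemma integrable_residualLoss (w θ : ℝ) : Integrable (residualLoss w θ) μ :=
  have hw := (isOpen_firstDisclosed w).measurableSet
  ((h₁.indicator hw.compl).const_mul θ).add ((h₂.indicator hw).const_mul (1 - θ))

lemma integral_residualLoss (w θ : ℝ) :
    ∫ p, residualLoss w θ p ∂μ =
      θ * ∫ p, (firstDisclosed w)ᶜ.indicator (fun q ↦ q.1 ^ 2) p ∂μ +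
        (1 - θ) * ∫ p, (firstDisclosed w).indicator (fun q ↦ q.2 ^ 2) p ∂μ := by
  have hw := (isOpen_firstDisclosed w).measurableSet
  simp only [residualLoss]
  rw [integral_add ((h₁.indicator hw.compl).const_mul θ) ((h₂.indicator hw).const_mul (1 - θ)),
    integral_const_mul, integral_const_mul]

lemma integral_residualLoss_self_lt [μ.IsOpenPosMeasure] (hw : w ∈ Icc 0 1)
    (hv : v ∈ Icc 0 1) (hwv : w ≠ v) :
    ∫ p, residualLoss w w p ∂μ < ∫ p, residualLoss v w p ∂μ := by
  obtain ⟨U, hU, hne, hlt⟩ := exists_isOpen_residualLoss_self_lt hw hv hwv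
  exact integral_lt_integral_of_le_of_lt_on_isOpen (integrable_residualLoss h₁ h₂ w w)
    (integrable_residualLoss h₁ h₂ v w) (residualLoss_self_le w v) hU hne hlt

end Integral

end ResidualLoss

/-- The law on `ℝ` with Lebesgue density `f`. Negative values of `f` are truncated to `0`. -/
noncomputable def densityLaw (f : ℝ → ℝ) : Measure ℝ :=
  volume.withDensity fun x ↦ ENNReal.ofReal (f x)

section DensityLaw

variable {f f₁ f₂ : ℝ → ℝ}

instance (f : ℝ → ℝ) : SFinite (densityLaw f) := by
  unfold densityLaw; infer_instance

lemma isFiniteMeasure_densityLaw (hf : Integrable f) : IsFiniteMeasure (densityLaw f) :=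
  isFiniteMeasure_withDensity_ofReal hf.2

lemma isOpenPosMeasure_densityLaw (hf : AEMeasurable f) (hpos : ∀ᵐ x, 0 < f x) :
    (densityLaw f).IsOpenPosMeasure := by
  refine (withDensity_absolutelyContinuous' hf.ennreal_ofReal ?_).isOpenPosMeasure
  filter_upwards [hpos] with x hx using (ENNReal.ofReal_pos.2 hx).ne'

lemma integral_densityLaw (hf : AEMeasurable f) (hnonneg : 0 ≤ᵐ[volume] f) (g : ℝ → ℝ) :
    ∫ x, g x ∂densityLaw f = ∫ x, g x * f x := by
  rw [densityLaw, integral_withDensity_eq_integral_toReal_smul₀ hf.ennreal_ofReal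
    (.of_forall fun _ ↦ ENNReal.ofReal_lt_top)]
  refine integral_congr_ae ?_
  filter_upwards [hnonneg] with x hx
  rw [ENNReal.toReal_ofReal hx, smul_eq_mul, mul_comm]

lemma integrable_densityLaw_iff (hf : AEMeasurable f) (hnonneg : 0 ≤ᵐ[volume] f) {g : ℝ → ℝ} :
    Integrable g (densityLaw f) ↔ Integrable fun x ↦ g x * f x := by
  rw [densityLaw, integrable_withDensity_iff_integrable_smul₀' hf.ennreal_ofReal
    (.of_forall fun _ ↦ ENNReal.ofReal_lt_top)]
  refine integrable_congr ?_
  filter_upwards [hnonneg] with x hx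
  rw [ENNReal.toReal_ofReal hx, smul_eq_mul, mul_comm]

lemma integral_prod_densityLaw (hf₁ : AEMeasurable f₁) (hnonneg₁ : 0 ≤ᵐ[volume] f₁)
    (hf₂ : AEMeasurable f₂) (hnonneg₂ : 0 ≤ᵐ[volume] f₂) {g : ℝ × ℝ → ℝ}
    (hg : Integrable g ((densityLaw f₁).prod (densityLaw f₂))) :
    ∫ p, g p ∂(densityLaw f₁).prod (densityLaw f₂) =
      ∫ x₁, (∫ x₂, g (x₁, x₂) * f₂ x₂) * f₁ x₁ := by
  rw [integral_prod g hg, integral_densityLaw hf₁ hnonneg₁]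
  simp only [integral_densityLaw hf₂ hnonneg₂]

end DensityLaw

/-- An a.e. positive Lebesgue density of a finite measure on `ℝ` with finite second moment. -/
structure IsPositiveDensity (f : ℝ → ℝ) : Prop where
  ae_pos : ∀ᵐ x, 0 < f x
  integrable : Integrable f
  integrable_sq_mul : Integrable fun x ↦ x ^ 2 * f x

lemma GoodDensity.isPositiveDensity {f : ℝ → ℝ} (hf : GoodDensity f) : IsPositiveDensity f :=
  ⟨.of_forall hf.2.1, integrable_of_integral_eq_one hf.2.2.2.1, hf.2.2.2.2⟩

namespace IsPositiveDensity

variable {f f₁ f₂ : ℝ → ℝ}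

lemma aemeasurable (hf : IsPositiveDensity f) : AEMeasurable f := hf.integrable.aemeasurable

lemma ae_nonneg (hf : IsPositiveDensity f) : 0 ≤ᵐ[volume] f := hf.ae_pos.mono fun _ ↦ le_of_lt

lemma integrable_sq (hf : IsPositiveDensity f) : Integrable (fun x ↦ x ^ 2) (densityLaw f) :=
  (integrable_densityLaw_iff hf.aemeasurable hf.ae_nonneg).2 hf.integrable_sq_mul

lemma integrable_fst_sq (hf₁ : IsPositiveDensity f₁) (hf₂ : IsPositiveDensity f₂) :
    Integrable (fun p : ℝ × ℝ ↦ p.1 ^ 2) ((densityLaw f₁).prod (densityLaw f₂)) :=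
  have := isFiniteMeasure_densityLaw hf₂.integrable
  hf₁.integrable_sq.comp_fst _

lemma integrable_snd_sq (hf₁ : IsPositiveDensity f₁) (hf₂ : IsPositiveDensity f₂) :
    Integrable (fun p : ℝ × ℝ ↦ p.2 ^ 2) ((densityLaw f₁).prod (densityLaw f₂)) :=
  have := isFiniteMeasure_densityLaw hf₁.integrable
  hf₂.integrable_sq.comp_snd _

end IsPositiveDensity

section ExpectedLoss

variable {f₁ f₂ : ℝ → ℝ} (hf₁ : IsPositiveDensity f₁) (hf₂ : IsPositiveDensity f₂)

include hf₁ hf₂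

lemma Hfun_eq_integral_indicator (w : ℝ) :
    Hfun f₁ f₂ w = ∫ p, (firstDisclosed w).indicator (fun q ↦ q.2 ^ 2) p
      ∂(densityLaw f₁).prod (densityLaw f₂) := by
  rw [integral_prod_densityLaw hf₁.aemeasurable hf₁.ae_nonneg hf₂.aemeasurable hf₂.ae_nonneg
    ((hf₁.integrable_snd_sq hf₂).indicator (isOpen_firstDisclosed w).measurableSet)]
  simp only [Hfun, indicator_apply, firstDisclosed, mem_ofPred_eq]

lemma Gfun_eq_integral_indicator (w : ℝ) :
    Gfun f₁ f₂ w = ∫ p, (firstDisclosed w)ᶜ.indicator (fun q ↦ q.1 ^ 2) p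
      ∂(densityLaw f₁).prod (densityLaw f₂) := by
  rw [integral_prod_densityLaw hf₁.aemeasurable hf₁.ae_nonneg hf₂.aemeasurable hf₂.ae_nonneg
    ((hf₁.integrable_fst_sq hf₂).indicator (isOpen_firstDisclosed w).measurableSet.compl)]
  simp only [Gfun, indicator_apply, firstDisclosed, mem_compl_iff, mem_ofPred_eq, not_lt]

lemma Lfun_eq_integral_residualLoss (w θ : ℝ) :
    Lfun f₁ f₂ w θ = ∫ p, residualLoss w θ p ∂(densityLaw f₁).prod (densityLaw f₂) := by
  rw [integral_residualLoss (hf₁.integrable_fst_sq hf₂) (hf₁.integrable_snd_sq hf₂), Lfun,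
    Gfun_eq_integral_indicator hf₁ hf₂, Hfun_eq_integral_indicator hf₁ hf₂]

lemma Lfun_self_lt {w v : ℝ} (hw : w ∈ Icc 0 1) (hv : v ∈ Icc 0 1) (hwv : w ≠ v) :
    Lfun f₁ f₂ w w < Lfun f₁ f₂ v w := by
  have := isOpenPosMeasure_densityLaw hf₁.aemeasurable hf₁.ae_pos
  have := isOpenPosMeasure_densityLaw hf₂.aemeasurable hf₂.ae_pos
  simp only [Lfun_eq_integral_residualLoss hf₁ hf₂]
  exact integral_residualLoss_self_lt (hf₁.integrable_fst_sq hf₂) (hf₁.integrable_snd_sq hf₂)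
    hw hv hwv

lemma exists_crossesAt_Lfun {w v : ℝ} (hw : w ∈ Icc 0 1) (hv : v ∈ Icc 0 1)
    (hwv : w < v) : ∃ θ ∈ Ioo w v, CrossesAt (Lfun f₁ f₂ w) (Lfun f₁ f₂ v) θ := by
  have hsub (t : ℝ) : Lfun f₁ f₂ w t - Lfun f₁ f₂ v t =
      t * (Gfun f₁ f₂ w - Gfun f₁ f₂ v) + (1 - t) * (Hfun f₁ f₂ w - Hfun f₁ f₂ v) := by
    simp only [Lfun]
    ring
  have hneg := sub_neg.2 (Lfun_self_lt hf₁ hf₂ hw hv hwv.ne)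
  have hpos := sub_pos.2 (Lfun_self_lt hf₁ hf₂ hv hw hwv.ne')
  rw [hsub] at hneg hpos
  obtain ⟨c, hc, θ, hθ, hroot⟩ := exists_eq_mul_sub_of_affine hwv hneg hpos
  refine ⟨θ, hθ, fun t ht ↦ sub_nonpos.1 ?_, fun t ht ↦ sub_nonneg.1 ?_⟩
  · rw [hsub, hroot]
    exact mul_nonpos_of_nonneg_of_nonpos hc.le (sub_nonpos.2 ht)
  · rw [hsub, hroot]
    exact mul_nonneg hc.le (sub_nonneg.2 ht)

end ExpectedLoss

theorem stmt12_general (f₁ f₂ : ℝ → ℝ) (hf₁ : IsPositiveDensity f₁) (hf₂ : IsPositiveDensity f₂)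
    (n : ℕ) (hn : 1 ≤ n) (w : ℕ → ℝ)
    (hw : ∀ i, 1 ≤ i → i ≤ n → w i ∈ Set.Ioo (0 : ℝ) 1)
    (hmono : ∀ i j, 1 ≤ i → i < j → j ≤ n → w i < w j) :
    ∃ θ : ℕ → ℝ, θ 0 = 0 ∧ θ n = 1 ∧
      (∀ i j, i < j → j ≤ n → θ i < θ j) ∧
      (∀ m, 1 ≤ m → m ≤ n → ∀ t ∈ Set.Ioo (θ (m - 1)) (θ m),
        ∀ k, 1 ≤ k → k ≤ n → Lfun f₁ f₂ (w m) t ≤ Lfun f₁ f₂ (w k) t) ∧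
      (∀ m, 1 ≤ m → m < n → Lfun f₁ f₂ (w m) (θ m) = Lfun f₁ f₂ (w (m + 1)) (θ m)) := by
  have hw' (i : ℕ) (hi : 1 ≤ i) (hin : i ≤ n) : w i ∈ Icc (0 : ℝ) 1 :=
    Ioo_subset_Icc_self (hw i hi hin)
  obtain ⟨θ, hθ₀, hθn, hθ, hcross⟩ := exists_strictMonoOn_interlacing hn (hw 1 le_rfl hn).1
    (hw n hn le_rfl).2 fun m hm hmn ↦ exists_crossesAt_Lfun hf₁ hf₂ (hw' m hm hmn.le)
      (hw' (m + 1) m.succ_pos hmn) (hmono m (m + 1) hm m.lt_succ_self hmn)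
  refine ⟨θ, hθ₀, hθn, fun i j hij hj ↦ hθ (hij.le.trans hj) hj hij, ?_,
    fun m hm hmn ↦ (hcross m hm hmn).eq⟩
  intro m hm hmn t ht k hk hkn
  exact le_of_crossesAt (ℓ := fun i ↦ Lfun f₁ f₂ (w i)) hθ.monotoneOn hcross ⟨hm, hmn⟩ ⟨hk, hkn⟩
    (Ioo_subset_Icc_self ht)

/-- Let `0 < w₁ < ⋯ < wₙ < 1` be given weights. Then there exist
thresholds `0 = θ₀ < θ₁ < ⋯ < θₙ = 1` such that for every `m ∈ {1,…,n}` and every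
`θ ∈ (θ_{m−1}, θ_m)`, `L(w_m∣θ) ≤ L(w_k∣θ)` for all `k ∈ {1,…,n}`; moreover for each
interior `m ∈ {1,…,n−1}`, `L(w_m∣θ_m) = L(w_{m+1}∣θ_m)`: the receiver's best response is
a monotone partition preference disclosure policy. -/
theorem stmt12 (f₁ f₂ : ℝ → ℝ) (hf₁ : GoodDensity f₁) (hf₂ : GoodDensity f₂)
    (n : ℕ) (hn : 1 ≤ n) (w : ℕ → ℝ)
    (hw : ∀ i, 1 ≤ i → i ≤ n → w i ∈ Set.Ioo (0 : ℝ) 1)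
    (hmono : ∀ i j, 1 ≤ i → i < j → j ≤ n → w i < w j) :
    ∃ θ : ℕ → ℝ, θ 0 = 0 ∧ θ n = 1 ∧
      (∀ i j, i < j → j ≤ n → θ i < θ j) ∧
      (∀ m, 1 ≤ m → m ≤ n → ∀ t ∈ Set.Ioo (θ (m - 1)) (θ m),
        ∀ k, 1 ≤ k → k ≤ n → Lfun f₁ f₂ (w m) t ≤ Lfun f₁ f₂ (w k) t) ∧
      (∀ m, 1 ≤ m → m < n → Lfun f₁ f₂ (w m) (θ m) = Lfun f₁ f₂ (w (m + 1)) (θ m)) :=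
  stmt12_general f₁ f₂ hf₁.isPositiveDensity hf₂.isPositiveDensity n hn w hw hmono
end
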